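/- Let T ∈ ℝ^(r×m) and g : Fin r → Fin m. Then the system T_{i,g(i)} - x_{g(i)} ≥ T_{i,k} - x_k (for all i, all k ≠ g(i)) is feasible in x ∈ ℝ^m if and only if for every list of distinct indices i_1 < ... < i_l in Fin r such that g(i_1), ..., g(i_l) are pairwise distinct, the sum Σ_z T_{i_z, g(i_z)} equals the maximum over all permutations σ of {1,...,l} of Σ_z T_{i_z, g(i_{σ(z)})}. -/

import Mathlib

/-!
Give the step from outcome `k` to outcome `g i` through type `i` the cost `T i (g i) - T i k`.
The incentive constraints say that `x (g i) - x k` is at most this cost. Summed along a permutation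
of types, the `x`-terms cancel, so the diagonal is a maximal matching. Conversely, a simple cycle
visits types with distinct outcomes, and its cost is the diagonal sum minus the sum along the cyclic
permutation of these types, so it is nonnegative. Loops can therefore be erased from walks without
raising their cost, so there is a cheapest walk from each outcome `k`, and `x k` can be taken to be
minus its cost.
-/

theorem eq_univ_sup'_iff {α β : Type*} [Fintype α] [Nonempty α] [SemilatticeSup β] (f : α → β)
    (a : α) : f a = Finset.univ.sup' Finset.univ_nonempty f ↔ ∀ b, f b ≤ f a := by
  refine ⟨fun h b => h ▸ Finset.le_sup' f (Finset.mem_univ b), fun h => ?_⟩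
  exact le_antisymm (Finset.le_sup' f (Finset.mem_univ a)) (Finset.sup'_le _ _ fun b _ => h b)

theorem map_formPerm_eq_rotate {α : Type*} [DecidableEq α] {l : List α} (hl : l.Nodup) :
    l.map l.formPerm = l.rotate 1 := by
  refine List.ext_getElem (by simp only [List.length_map, List.length_rotate]) fun n _ _ => ?_
  rw [List.getElem_map, List.getElem_rotate, List.formPerm_apply_getElem l hl]

theorem map_formPerm_inv_append_singleton {α : Type*} [DecidableEq α] {a : α} {l : List α}
    (hl : (l ++ [a]).Nodup) : (l ++ [a]).map ⇑(a :: l).formPerm⁻¹ = a :: l := by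
  have hnodup : (a :: l).Nodup := by simpa using List.nodup_middle.1 hl
  have hrotate : l ++ [a] = (a :: l).map (a :: l).formPerm := by
    rw [map_formPerm_eq_rotate hnodup, List.rotate_cons_succ, List.rotate_zero]
  rw [hrotate, List.map_map, ← Equiv.Perm.coe_mul, inv_mul_cancel, Equiv.Perm.coe_one, List.map_id]

section Walks

variable {ι κ M : Type*}

/-- The total cost of the walk that starts at the vertex `k` and takes the steps in the list, where
step `i` leads from any vertex `j` to `g i` at cost `c i j`. `List.zipWith` pairs each step with the
vertex it leaves and discards the final vertex of the walk. -/
def walkCost [AddMonoid M] (c : ι → κ → M) (g : ι → κ) (k : κ) (l : List ι) : M :=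
  (List.zipWith c l (k :: l.map g)).sum

/-- No simple cycle has negative cost. A cycle is given by its list of steps; it starts where its
last step `a` leads, so that `Nodup` says that it visits no vertex twice. -/
def HasNonnegCycles [AddMonoid M] [LE M] (c : ι → κ → M) (g : ι → κ) : Prop :=
  ∀ a l, ((l ++ [a]).map g).Nodup → 0 ≤ walkCost c g (g a) (l ++ [a])

theorem walkCost_cons [AddMonoid M] (c : ι → κ → M) (g : ι → κ) (k : κ) (i : ι) (l : List ι) :
    walkCost c g k (i :: l) = c i k + walkCost c g (g i) l := by
  simp only [walkCost, List.map_cons, List.zipWith_cons_cons, List.sum_cons]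

theorem walkCost_append_cons [AddMonoid M] (c : ι → κ → M) (g : ι → κ) (k : κ) (l₁ : List ι)
    (a : ι) (l₂ : List ι) :
    walkCost c g k (l₁ ++ a :: l₂) = walkCost c g k (l₁ ++ [a]) + walkCost c g (g a) l₂ := by
  induction l₁ generalizing k with
  | nil => simp [walkCost]
  | cons i l₁ ih => simp only [List.cons_append, walkCost_cons, ih, add_assoc]

variable [AddCommMonoid M] {c : ι → κ → M} {g : ι → κ}

theorem HasNonnegCycles.exists_nodup_walkCost_le [Preorder M] [IsOrderedAddMonoid M]
    (hcycle : HasNonnegCycles c g) (k : κ) (l : List ι) :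
    ∃ p : List ι, (k :: p.map g).Nodup ∧ walkCost c g k p ≤ walkCost c g k l := by
  induction l generalizing k with
  | nil => exact ⟨[], List.nodup_singleton k, le_rfl⟩
  | cons i l ih =>
    obtain ⟨p, hp, hpl⟩ := ih (g i)
    have hcons : walkCost c g k (i :: p) ≤ walkCost c g k (i :: l) := by
      simpa only [walkCost_cons] using add_le_add_right hpl (c i k)
    by_cases hk : k ∈ (i :: p).map g
    · obtain ⟨a, ha, rfl⟩ := List.mem_map.1 hk
      obtain ⟨loop, rest, hsplit⟩ := List.append_of_mem ha
      have hnodup : ((loop ++ [a]).map g ++ rest.map g).Nodup := by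
        rw [← List.map_append, List.append_assoc, List.singleton_append, ← hsplit]
        exact hp
      have hrest : (g a :: rest.map g).Nodup := by
        rw [List.map_append, List.append_assoc] at hnodup
        exact hnodup.of_append_right
      refine ⟨rest, hrest, le_trans ?_ hcons⟩
      rw [hsplit, walkCost_append_cons]
      exact le_add_of_nonneg_left (hcycle a loop hnodup.of_append_left)
    · exact ⟨i :: p, List.nodup_cons.2 ⟨hk, hp⟩, hcons⟩

theorem HasNonnegCycles.exists_forall_walkCost_le [LinearOrder M] [IsOrderedAddMonoid M] [Finite ι]
    (hcycle : HasNonnegCycles c g) (k : κ) :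
    ∃ p, ∀ l, walkCost c g k p ≤ walkCost c g k l := by
  have := Fintype.ofFinite ι
  have hfinite : {p : List ι | (k :: p.map g).Nodup}.Finite :=
    (List.finite_length_le ι (Fintype.card ι)).subset fun _ hp =>
      (hp.of_cons.of_map g).length_le_card
  obtain ⟨p, -, hp⟩ :=
    Set.exists_min_image _ (walkCost c g k) hfinite ⟨[], List.nodup_singleton k⟩
  refine ⟨p, fun l => ?_⟩
  obtain ⟨q, hq, hql⟩ := hcycle.exists_nodup_walkCost_le k l
  exact (hp q hq).trans hql

theorem HasNonnegCycles.exists_potential [LinearOrder M] [IsOrderedAddMonoid M] [Finite ι]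
    (hcycle : HasNonnegCycles c g) :
    ∃ d : κ → M, ∀ i k, d k ≤ c i k + d (g i) := by
  choose p hp using hcycle.exists_forall_walkCost_le
  refine ⟨fun k => walkCost c g k (p k), fun i k => ?_⟩
  simpa only [walkCost_cons] using hp k (i :: p (g i))

theorem walkCost_cycle_eq_sum [DecidableEq ι] (c : ι → κ → M) (g : ι → κ) {a : ι} {l : List ι}
    (hl : (l ++ [a]).Nodup) :
    walkCost c g (g a) (l ++ [a]) =
      ∑ i ∈ (l ++ [a]).toFinset, c i (g ((a :: l).formPerm⁻¹ i)) := by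
  have hdrop : List.zipWith c (l ++ [a]) ((a :: l).map g ++ [g a]) =
      List.zipWith c (l ++ [a]) ((a :: l).map g) := by
    simpa using List.zipWith_append (f := c) (l₁ := l ++ [a]) (l₁' := [])
      (l₂ := (a :: l).map g) (l₂' := [g a]) (by simp)
  calc walkCost c g (g a) (l ++ [a])
      = (List.zipWith c (l ++ [a]) ((a :: l).map g)).sum := by
        rw [← hdrop]; simp [walkCost]
    _ = ((l ++ [a]).map fun i => c i (g ((a :: l).formPerm⁻¹ i))).sum := by
        conv_lhs =>
          rw [← map_formPerm_inv_append_singleton hl, List.map_map, List.zipWith_map_right,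
            List.zipWith_self]
        rfl
    _ = _ := (List.sum_toFinset _ hl).symm

end Walks

section Matchings

variable {ι κ M G : Type*}

/-- Along every increasing family `f` of rows of `A` with distinct columns `g ∘ f`, the diagonal
`A (f z) (g (f z))` has the largest sum among all matchings of these rows with these columns, i.e.
it attains the tropical determinant of the corresponding square minor. -/
def IsDiagonalMaximal [LinearOrder ι] [AddCommMonoid M] [LE M] (A : ι → κ → M) (g : ι → κ) : Prop :=
  ∀ (n : ℕ) (f : Fin n → ι), StrictMono f → Function.Injective (g ∘ f) →
    ∀ σ : Equiv.Perm (Fin n), ∑ z, A (f z) (g (f (σ z))) ≤ ∑ z, A (f z) (g (f z))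

theorem sum_perm_le_of_potential [Fintype ι] [AddCommGroup G] [Preorder G]
    [IsOrderedAddMonoid G] {A : ι → κ → G} {g : ι → κ} {x : κ → G}
    (hx : ∀ i k, A i k - x k ≤ A i (g i) - x (g i)) (σ : Equiv.Perm ι) :
    ∑ i, A i (g (σ i)) ≤ ∑ i, A i (g i) := by
  have hsum : ∑ i, (A i (g (σ i)) - x (g (σ i))) ≤ ∑ i, (A i (g i) - x (g i)) :=
    Finset.sum_le_sum fun i _ => hx i (g (σ i))
  rwa [Finset.sum_sub_distrib, Finset.sum_sub_distrib, Equiv.sum_comp σ fun i => x (g i),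
    sub_le_sub_iff_right] at hsum

theorem IsDiagonalMaximal.sum_perm_le [LinearOrder ι] [AddCommMonoid M] [LE M]
    {A : ι → κ → M} {g : ι → κ} (hmax : IsDiagonalMaximal A g) {s : Finset ι} (hg : Set.InjOn g s)
    {σ : Equiv.Perm ι} (hσ : ∀ i, σ i ∈ s ↔ i ∈ s) :
    ∑ i ∈ s, A i (g (σ i)) ≤ ∑ i ∈ s, A i (g i) := by
  let e := s.orderIsoOfFin rfl
  have hsum (f : ι → M) : ∑ z, f (e z) = ∑ i ∈ s, f i := by
    rw [← Finset.sum_coe_sort s]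
    exact Equiv.sum_comp e.toEquiv fun i : s => f i
  have hinj : Function.Injective (g ∘ fun z => (e z : ι)) :=
    fun z w h => e.injective (Subtype.ext (hg (e z).2 (e w).2 h))
  have hle := hmax s.card (fun z => e z) e.strictMono hinj
    (e.symm.toEquiv.permCongr (σ.subtypePerm hσ))
  rw [← hsum, ← hsum]
  simpa using hle

theorem IsDiagonalMaximal.hasNonnegCycles [LinearOrder ι] [AddCommGroup G] [Preorder G]
    [IsOrderedAddMonoid G] {A : ι → κ → G} {g : ι → κ} (hmax : IsDiagonalMaximal A g) :
    HasNonnegCycles (fun i k => A i (g i) - A i k) g := by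
  intro a l hl
  rw [walkCost_cycle_eq_sum _ _ (hl.of_map g), Finset.sum_sub_distrib, sub_nonneg]
  refine hmax.sum_perm_le (fun i hi j hj => ?_) fun i => ?_
  · exact List.inj_on_of_nodup_map hl (List.mem_toFinset.1 hi) (List.mem_toFinset.1 hj)
  · simpa [or_comm] using
      (List.formPerm_mem_iff_mem (l := a :: l) (x := (a :: l).formPerm⁻¹ i)).symm

end Matchings

theorem stmt_1_general {ι κ G : Type*} [LinearOrder ι] [Finite ι] [AddCommGroup G] [LinearOrder G]
    [IsOrderedAddMonoid G] (T : Matrix ι κ G) (g : ι → κ) :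
    (∃ x : κ → G, ∀ i k, k ≠ g i → T i (g i) - x (g i) ≥ T i k - x k) ↔
    (∀ (l : ℕ) (f : Fin l → ι), StrictMono f → Function.Injective (g ∘ f) →
      (∑ z, T (f z) (g (f z))) =
        Finset.univ.sup' (Finset.univ_nonempty)
          (fun σ : Equiv.Perm (Fin l) => ∑ z, T (f z) (g (f (σ z))))) := by
  have hdiag : IsDiagonalMaximal T g ↔ _ := forall₄_congr fun l f _ _ =>
    (eq_univ_sup'_iff (fun σ : Equiv.Perm (Fin l) => ∑ z, T (f z) (g (f (σ z)))) 1).symm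
  refine Iff.trans ⟨?_, fun hmax => ?_⟩ hdiag
  · rintro ⟨x, hx⟩ l f - - σ
    have hx' (i k) : T i k - x k ≤ T i (g i) - x (g i) := by
      obtain rfl | hk := eq_or_ne k (g i)
      exacts [le_rfl, hx i k hk]
    exact sum_perm_le_of_potential (fun z k => hx' (f z) k) σ
  · obtain ⟨d, hd⟩ := hmax.hasNonnegCycles.exists_potential
    refine ⟨-d, fun i k _ => ?_⟩
    have hik : d k ≤ T i (g i) - T i k + d (g i) := hd i k
    calc T i k - (-d) k = T i k + d k := sub_neg_eq_add _ _
      _ ≤ T i k + (T i (g i) - T i k + d (g i)) := by gcongr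
      _ = T i (g i) - (-d) (g i) := by rw [Pi.neg_apply]; abel

theorem stmt_1 {r m : ℕ} (T : Matrix (Fin r) (Fin m) ℝ) (g : Fin r → Fin m) :
    (∃ x : Fin m → ℝ, ∀ i k, k ≠ g i → T i (g i) - x (g i) ≥ T i k - x k) ↔
    (∀ (l : ℕ) (ι : Fin l → Fin r), StrictMono ι → Function.Injective (g ∘ ι) →
      (∑ z, T (ι z) (g (ι z))) =
        Finset.univ.sup' (Finset.univ_nonempty)
          (fun σ : Equiv.Perm (Fin l) => ∑ z, T (ι z) (g (ι (σ z))))) :=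
  stmt_1_general T g
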